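/- Suppose the specification γ is monotone. Then there exist probability measures P_− and P_+ on Ω, both specified by γ, such that for every bounded increasing local function f : Ω → ℝ: the net V ↦ (γ_V f)(𝐛−) over finite V ⊂ ℤ^d directed by inclusion is increasing with limit E_{P_−}[f], the net V ↦ (γ_V f)(𝐛+) is decreasing with limit E_{P_+}[f], and E_{P_−}[f] ≤ E_P[f] ≤ E_{P_+}[f] for every probability measure P specified by γ. Moreover, there is exactly one probability measure specified by γ if and only if P_+ = P_−. -/

import Mathlib

open MeasureTheory Filter

noncomputable section

namespace RandomField

/-- Sites of the lattice `ℤ^d`. -/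
abbrev Site (d : ℕ) := Fin d → ℤ

variable {E : Type*} [MeasurableSpace E] {d : ℕ}

/-- Configurations `E^{ℤ^d}`. -/
abbrev Conf (E : Type*) (d : ℕ) := Site d → E

/-- The cylinder σ-algebra `σ(X_S)` on `E^{ℤ^d}` generated by the coordinates in `S`. -/
def cylσ (E : Type*) [MeasurableSpace E] {d : ℕ} (S : Set (Site d)) :
    MeasurableSpace (Conf E d) :=
  ⨆ v ∈ S, MeasurableSpace.comap (fun x : Conf E d => x v) inferInstance

/-- Nearest neighbors: `‖v - w‖ = 1`. -/
def Adj (v w : Site d) : Prop := (∑ i, (v i - w i).natAbs) = 1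

/-- The exterior boundary `∂V` of a finite set of sites `V`. -/
def bdry (V : Finset (Site d)) : Set (Site d) := {w | w ∉ V ∧ ∃ v ∈ V, Adj v w}

/-- A specification: a family of probability kernels `γ_V` indexed by finite `V ⊂ ℤ^d` with
(1) `γ_V(·, A)` is `σ(X_{∂V})`-measurable for `A ∈ σ(X_V)`;
(2) `γ_V(x, A) = 1_A(x)` for `A ∈ σ(X_{V^c})`;
(3) `γ_V γ_W = γ_V` for `W ⊆ V`. -/
structure IsSpecification (γ : Finset (Site d) → Conf E d → Measure (Conf E d)) : Prop where
  prob : ∀ V x, IsProbabilityMeasure (γ V x)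
  kernel : ∀ (V) (A : Set (Conf E d)), MeasurableSet A → Measurable fun x => γ V x A
  bdryMeas : ∀ (V : Finset (Site d)) (A : Set (Conf E d)),
    MeasurableSet[cylσ E (↑V : Set (Site d))] A →
    Measurable[cylσ E (bdry V)] fun x => γ V x A
  proper : ∀ (V : Finset (Site d)) (A : Set (Conf E d)),
    MeasurableSet[cylσ E ((↑V : Set (Site d))ᶜ)] A →
    ∀ x, γ V x A = A.indicator (fun _ => (1 : ENNReal)) x
  consistent : ∀ V W : Finset (Site d), W ⊆ V → ∀ (A : Set (Conf E d)), MeasurableSet A →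
    ∀ x, ∫⁻ z, γ W z A ∂(γ V x) = γ V x A

/-- The two-point spin space `{-1, 1} ⊆ ℝ`. -/
abbrev Spin : Type := ({-1, 1} : Set ℝ)

/-- Spin configurations `{-1,1}^{ℤ^d}`, with the pointwise partial order. -/
abbrev SConf (d : ℕ) := Site d → Spin

/-- Boundedness of a real-valued function. -/
def Bdd {α : Type*} (f : α → ℝ) : Prop := ∃ C, ∀ x, |f x| ≤ C

/-- A local function: one depending on only finitely many coordinates. -/
def IsLocal {d : ℕ} (f : SConf d → ℝ) : Prop :=
  ∃ S : Finset (Site d), ∀ x z : SConf d, (∀ v ∈ S, x v = z v) → f x = f z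

/-- A specification is monotone if `γ_V f` is increasing for every bounded
(measurable) increasing `f` and every finite `V`. -/
def MonotoneSpec {d : ℕ} (γ : Finset (Site d) → SConf d → Measure (SConf d)) : Prop :=
  ∀ (V : Finset (Site d)) (f : SConf d → ℝ), Measurable f → Monotone f → Bdd f →
    Monotone fun x => ∫ z, f z ∂(γ V x)

/-- `μ` is specified by `δ`: `∫_B δ_V(x, A) μ(dx) = μ(A ∩ B)` for every finite `V`,
measurable `A`, and `B ∈ σ(X_{V^c})`. -/
def SpecifiedBy {d : ℕ} (δ : Finset (Site d) → SConf d → Measure (SConf d))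
    (μ : Measure (SConf d)) : Prop :=
  ∀ (V : Finset (Site d)) (A B : Set (SConf d)), MeasurableSet A →
    MeasurableSet[cylσ Spin ((↑V : Set (Site d))ᶜ)] B →
    ∫⁻ x in B, δ V x A ∂μ = μ (A ∩ B)

/-- The conditional specification
`γ_V^y(x, A) ∝ ∫ 1_A(z) ∏_{v∈V} e^{β_v y_v z_v} γ_V(x, dz)`. -/
def condSpinKer {d : ℕ} (γ : Finset (Site d) → SConf d → Measure (SConf d))
    (β : Site d → ℝ) (y : SConf d) (V : Finset (Site d)) (x : SConf d) :
    Measure (SConf d) :=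
  let ρ := (γ V x).withDensity fun z =>
    ENNReal.ofReal (Real.exp (∑ v ∈ V, β v * (y v : ℝ) * (z v : ℝ)))
  (ρ Set.univ)⁻¹ • ρ

/-- The maximal configuration `𝐛+`. -/
def bpos {d : ℕ} : SConf d := fun _ => ⟨1, by norm_num⟩

/-- The minimal configuration `𝐛−`. -/
def bneg {d : ℕ} : SConf d := fun _ => ⟨-1, by norm_num⟩

/-!
Configurations form a compact space, so for a fixed boundary condition `x` the net `V ↦ γ V x` has a
weak cluster point. By properness, `γ V` maps indicators of finite-dimensional cylinders to
functions of finitely many spins, which are continuous; hence the identity `γ W γ V = γ W`, valid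
for all `W ⊇ V`, passes to every cluster point `P` and gives `P γ V = P`, i.e. `P` is specified
by `γ`.

If `μ γ V = μ` and `f` is increasing, integrating `γ V f (𝐛−) ≤ γ V f ≤ γ V f (𝐛+)` against `μ`
brackets `∫ f dμ`. Taking `μ = γ W (𝐛±)` with `W ⊇ V` shows that the nets are monotone, so they
converge to their cluster values; taking `μ` specified by `γ` and passing to the limit shows that
the limits are extremal. Finally, a measure is determined by its values on the sets of
configurations equal to `+1` on a given finite set, whose indicators are increasing and local.
-/

open ProbabilityTheory
open scoped Topology

theorem tendsto_atTop_of_monotone_of_mapClusterPt {ι α : Type*} [Preorder ι] [Preorder α]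
    [TopologicalSpace α] [OrderClosedTopology α] [SupConvergenceClass α] {F : ι → α} {a : α}
    (hF : Monotone F) (ha : MapClusterPt a atTop F) : Tendsto F atTop (𝓝 a) := by
  refine tendsto_atTop_isLUB hF ⟨?_, fun b hb => ?_⟩
  · rintro _ ⟨i, rfl⟩
    exact isClosed_Ici.mem_of_mapClusterPt ha ((eventually_ge_atTop i).mono fun j hij => hF hij)
  · exact isClosed_Iic.mem_of_mapClusterPt ha (.of_forall fun i => hb ⟨i, rfl⟩)

theorem tendsto_atTop_of_antitone_of_mapClusterPt {ι α : Type*} [Preorder ι] [Preorder α]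
    [TopologicalSpace α] [OrderClosedTopology α] [InfConvergenceClass α] {F : ι → α} {a : α}
    (hF : Antitone F) (ha : MapClusterPt a atTop F) : Tendsto F atTop (𝓝 a) :=
  tendsto_atTop_of_monotone_of_mapClusterPt (α := αᵒᵈ) hF.dual_right ha

section InvariantMeasures

variable {X : Type*} [MeasurableSpace X]

theorem integral_real_eq_real_bind {Y : Type*} [MeasurableSpace Y] {κ : Kernel X Y}
    [IsFiniteKernel κ] {μ : Measure X} {s : Set Y} (hs : MeasurableSet s) :
    ∫ x, (κ x).real s ∂μ = (μ.bind κ).real s := by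
  rw [measureReal_def, Measure.bind_apply hs κ.measurable.aemeasurable]
  exact integral_toReal (κ.measurable_coe hs).aemeasurable (ae_of_all _ fun x => measure_lt_top _ _)

variable {κ : Kernel X X} {μ : Measure X}

theorem comp_const_apply_of_invariant (hκ : κ.Invariant μ) :
    (κ ∘ₖ Kernel.const Unit μ) () = μ := by
  rw [Kernel.comp_apply, Kernel.const_apply, hκ.def]

theorem integrable_integral_of_invariant {F : Type*} [NormedAddCommGroup F] [NormedSpace ℝ F]
    {f : X → F} (hκ : κ.Invariant μ) (hf : Integrable f μ) :
    Integrable (fun x => ∫ y, f y ∂κ x) μ := by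
  rw [← comp_const_apply_of_invariant hκ] at hf
  exact hf.integral_comp

theorem integral_integral_of_invariant {F : Type*} [NormedAddCommGroup F] [NormedSpace ℝ F]
    {f : X → F} (hκ : κ.Invariant μ) (hf : Integrable f μ) :
    ∫ x, ∫ y, f y ∂κ x ∂μ = ∫ x, f x ∂μ := by
  have hcomp := comp_const_apply_of_invariant hκ
  rw [← hcomp] at hf
  simpa only [hcomp, Kernel.const_apply] using (Kernel.integral_comp hf).symm

variable {f : X → ℝ}

theorem le_integral_of_invariant [IsProbabilityMeasure μ] (hκ : κ.Invariant μ)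
    (hf : Integrable f μ) {c : ℝ} (hc : ∀ x, c ≤ ∫ y, f y ∂κ x) : c ≤ ∫ x, f x ∂μ :=
  calc c = ∫ _, c ∂μ := by simp
    _ ≤ ∫ x, ∫ y, f y ∂κ x ∂μ :=
        integral_mono (integrable_const c) (integrable_integral_of_invariant hκ hf) hc
    _ = ∫ x, f x ∂μ := integral_integral_of_invariant hκ hf

theorem integral_le_of_invariant [IsProbabilityMeasure μ] (hκ : κ.Invariant μ)
    (hf : Integrable f μ) {c : ℝ} (hc : ∀ x, ∫ y, f y ∂κ x ≤ c) : ∫ x, f x ∂μ ≤ c :=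
  calc ∫ x, f x ∂μ = ∫ x, ∫ y, f y ∂κ x ∂μ := (integral_integral_of_invariant hκ hf).symm
    _ ≤ ∫ _, c ∂μ :=
        integral_mono (integrable_integral_of_invariant hκ hf) (integrable_const c) hc
    _ = c := by simp

variable [TopologicalSpace X] [OpensMeasurableSpace X] [IsMarkovKernel κ]

theorem real_bind_eq_of_mapClusterPt {ι : Type*} {l : Filter ι} {ν : ι → ProbabilityMeasure X}
    {P : ProbabilityMeasure X} (hP : MapClusterPt P l ν)
    (hinv : ∀ᶠ i in l, κ.Invariant (ν i : Measure X)) {s : Set X} (hs : IsClopen s)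
    (hcont : Continuous fun x => (κ x).real s) :
    ((P : Measure X).bind κ).real s = (P : Measure X).real s := by
  have hbound (x : X) : ‖(κ x).real s‖ ≤ 1 := by
    rw [Real.norm_of_nonneg measureReal_nonneg]
    exact measureReal_le_one
  let defect : BoundedContinuousFunction X ℝ :=
    .ofNormedAddCommGroup (fun x => (κ x).real s) hcont 1 hbound - .indicator s hs
  have integral_defect (Q : ProbabilityMeasure X) :
      ∫ x, defect x ∂(Q : Measure X) =
        ((Q : Measure X).bind κ).real s - (Q : Measure X).real s := by
    have hsplit := integral_sub
      ((BoundedContinuousFunction.ofNormedAddCommGroup _ hcont 1 hbound).integrable (Q : Measure X))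
      ((BoundedContinuousFunction.indicator s hs).integrable (Q : Measure X))
    rw [← integral_real_eq_real_bind hs.1.measurableSet,
      ← integral_indicator_one hs.1.measurableSet]
    exact hsplit
  have hcluster := hP.continuousAt_comp
    (ProbabilityMeasure.continuous_integral_boundedContinuousFunction defect).continuousAt
  have hzero : ∫ x, defect x ∂(P : Measure X) ∈ ({0} : Set ℝ) :=
    isClosed_singleton.mem_of_mapClusterPt hcluster (hinv.mono fun i hi => by
      rw [Set.mem_singleton_iff, Function.comp_apply, integral_defect, hi.def, sub_self])
  rwa [Set.mem_singleton_iff, integral_defect, sub_eq_zero] at hzero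

theorem invariant_of_mapClusterPt {ι : Type*} {l : Filter ι} {ν : ι → ProbabilityMeasure X}
    {P : ProbabilityMeasure X} (hP : MapClusterPt P l ν)
    (hinv : ∀ᶠ i in l, κ.Invariant (ν i : Measure X)) {C : Set (Set X)}
    (hgen : ‹MeasurableSpace X› = MeasurableSpace.generateFrom C) (hpi : IsPiSystem C)
    (hclopen : ∀ s ∈ C, IsClopen s) (hcont : ∀ s ∈ C, Continuous fun x => (κ x).real s) :
    κ.Invariant (P : Measure X) :=
  ext_of_generate_finite C hgen hpi
    (fun s hs => (measureReal_eq_measureReal_iff).1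
      (real_bind_eq_of_mapClusterPt hP hinv (hclopen s hs) (hcont s hs)))
    (by simp)

end InvariantMeasures

theorem mapClusterPt_integral {X ι : Type*} [MeasurableSpace X] [TopologicalSpace X]
    [CompactSpace X] [OpensMeasurableSpace X] {l : Filter ι} {ν : ι → ProbabilityMeasure X}
    {P : ProbabilityMeasure X} (hP : MapClusterPt P l ν) {f : X → ℝ} (hf : Continuous f) :
    MapClusterPt (∫ x, f x ∂(P : Measure X)) l fun i => ∫ x, f x ∂(ν i : Measure X) :=
  hP.continuousAt_comp
    (ProbabilityMeasure.continuous_integral_continuousMap (⟨f, hf⟩ : C(X, ℝ))).continuousAt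

section FinitelyManyCoordinates

variable {ι : Type*} {X : ι → Type*}

theorem continuous_of_dependsOn_finset [∀ i, TopologicalSpace (X i)] [∀ i, DiscreteTopology (X i)]
    {β : Type*} [TopologicalSpace β] [Nonempty β] {f : (∀ i, X i) → β} {S : Finset ι}
    (hf : DependsOn f (S : Set ι)) : Continuous f := by
  obtain ⟨g, rfl⟩ := dependsOn_iff_exists_comp.1 hf
  exact continuous_of_discreteTopology.comp (Pi.continuous_domRestrict (S : Set ι))

variable [∀ i, MeasurableSpace (X i)] {S T : Set ι}

theorem dependsOn_of_measurable_cylinderEvents {β : Type*} [MeasurableSpace β]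
    [MeasurableSingletonClass β] {f : (∀ i, X i) → β} (hf : Measurable[cylinderEvents S] f) :
    DependsOn f S := by
  have hle : cylinderEvents (X := X) S ≤ MeasurableSpace.pi.comap S.domRestrict :=
    iSup₂_le fun v hv => Measurable.comap_le
      ((measurable_pi_apply (⟨v, hv⟩ : S)).comp (comap_measurable S.domRestrict))
  exact dependsOn_iff_factorsThrough.2 (hf.mono hle le_rfl).factorsThrough

theorem measurableSet_cylinderEvents_pi (hS : S.Countable) (hST : S ⊆ T) {t : ∀ i, Set (X i)}
    (ht : ∀ i ∈ S, MeasurableSet (t i)) : MeasurableSet[cylinderEvents T] (S.pi t) := by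
  rw [Set.pi_def]
  exact MeasurableSet.biInter hS fun i hi => measurable_cylinderEvent_apply (hST hi) (ht i hi)

end FinitelyManyCoordinates

theorem finite_bdry (V : Finset (Site d)) : (bdry V).Finite := by
  refine (V.finite_toSet.biUnion fun v _ => Set.finite_Icc (v - 1) (v + 1)).subset ?_
  rintro w ⟨-, v, hv, hvw⟩
  have hcoord (i : Fin d) : (v i - w i).natAbs ≤ 1 :=
    (Finset.single_le_sum_of_canonicallyOrdered (Finset.mem_univ i)).trans_eq hvw
  refine Set.mem_biUnion hv ⟨fun i => ?_, fun i => ?_⟩ <;>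
    · have := hcoord i
      simp only [Pi.sub_apply, Pi.add_apply, Pi.one_apply]
      omega

namespace IsSpecification

variable {γ : Finset (Site d) → Conf E d → Measure (Conf E d)}

/-- `γ V` bundled as a Markov kernel from configurations to configurations, so that `μ γ V = μ`
becomes `(hγ.toKernel V).Invariant μ`. -/
def toKernel (hγ : IsSpecification γ) (V : Finset (Site d)) : Kernel (Conf E d) (Conf E d) where
  toFun := γ V
  measurable' := Measure.measurable_of_measurable_coe _ (hγ.kernel V)

instance (hγ : IsSpecification γ) (V : Finset (Site d)) : IsMarkovKernel (hγ.toKernel V) :=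
  ⟨hγ.prob V⟩

/-- The random field `γ V x` as a point of the space of probability measures, where its weak
cluster points as `V` grows are taken. -/
def field (hγ : IsSpecification γ) (V : Finset (Site d)) (x : Conf E d) :
    ProbabilityMeasure (Conf E d) :=
  ⟨γ V x, hγ.prob V x⟩

theorem invariant_toKernel_iff (hγ : IsSpecification γ) {V : Finset (Site d)}
    {μ : Measure (Conf E d)} :
    (hγ.toKernel V).Invariant μ ↔ ∀ A, MeasurableSet A → ∫⁻ x, γ V x A ∂μ = μ A := by
  have hbind {A : Set (Conf E d)} (hA : MeasurableSet A) :
      μ.bind (hγ.toKernel V) A = ∫⁻ x, γ V x A ∂μ :=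
    Measure.bind_apply hA (hγ.toKernel V).measurable.aemeasurable
  refine ⟨fun h A hA => ?_, fun h => Measure.ext fun A hA => (hbind hA).trans (h A hA)⟩
  rw [← hbind hA, h.def]

theorem invariant_field (hγ : IsSpecification γ) {V W : Finset (Site d)} (hVW : V ⊆ W)
    (x : Conf E d) : (hγ.toKernel V).Invariant (hγ.field W x : Measure (Conf E d)) :=
  hγ.invariant_toKernel_iff.2 fun A hA => hγ.consistent W V hVW A hA x

theorem apply_inter (hγ : IsSpecification γ) {V : Finset (Site d)} {A B : Set (Conf E d)}
    (hB : MeasurableSet[cylσ E (V : Set (Site d))ᶜ] B) (x : Conf E d) :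
    γ V x (A ∩ B) = B.indicator (fun x => γ V x A) x := by
  have := hγ.prob V x
  have hproper := hγ.proper V B hB x
  by_cases hx : x ∈ B
  · rw [Set.indicator_of_mem hx] at hproper ⊢
    exact measure_inter_conull ((prob_compl_eq_zero_iff (cylinderEvents_le_pi B hB)).2 hproper)
  · rw [Set.indicator_of_notMem hx] at hproper ⊢
    exact measure_inter_null_of_null_right A hproper

theorem dependsOn_apply_pi (hγ : IsSpecification γ) (V S : Finset (Site d)) {t : Site d → Set E}
    (ht : ∀ v, MeasurableSet (t v)) :
    DependsOn (fun x => γ V x ((S : Set (Site d)).pi t)) (S ∪ bdry V) := by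
  have hinside : MeasurableSet[cylσ E (V : Set (Site d))] ((S ∩ V : Set (Site d)).pi t) :=
    measurableSet_cylinderEvents_pi (Set.to_countable _) Set.inter_subset_right fun v _ => ht v
  have houtside : MeasurableSet[cylσ E (V : Set (Site d))ᶜ] ((S \ V : Set (Site d)).pi t) :=
    measurableSet_cylinderEvents_pi (Set.to_countable _) (fun _ hv => hv.2) fun v _ => ht v
  have hsplit (x : Conf E d) : γ V x ((S : Set (Site d)).pi t) =
      ((S \ V : Set (Site d)).pi t).indicator (fun x => γ V x ((S ∩ V : Set (Site d)).pi t)) x := by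
    rw [← hγ.apply_inter houtside, ← Set.union_pi, Set.inter_union_sdiff]
  intro x z hxz
  have hmem : x ∈ (S \ V : Set (Site d)).pi t ↔ z ∈ (S \ V : Set (Site d)).pi t :=
    forall₂_congr fun v hv => by rw [hxz v (.inl hv.1)]
  have hbdry : γ V x ((S ∩ V : Set (Site d)).pi t) = γ V z ((S ∩ V : Set (Site d)).pi t) :=
    dependsOn_of_measurable_cylinderEvents (hγ.bdryMeas V _ hinside) fun v hv => hxz v (.inr hv)
  classical simp only [hsplit, Set.indicator_apply, hmem, hbdry]

theorem exists_mapClusterPt_field [TopologicalSpace E] [CompactSpace E] [T2Space E]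
    [SecondCountableTopology E] [BorelSpace E] (hγ : IsSpecification γ) (x : Conf E d) :
    ∃ P : ProbabilityMeasure (Conf E d), MapClusterPt P atTop fun V => hγ.field V x :=
  exists_clusterPt_of_compactSpace _

variable [TopologicalSpace E] [DiscreteTopology E]

theorem continuous_real_pi (hγ : IsSpecification γ) (V S : Finset (Site d)) {t : Site d → Set E}
    (ht : ∀ v, MeasurableSet (t v)) :
    Continuous fun x => (hγ.toKernel V x).real ((S : Set (Site d)).pi t) := by
  classical
  refine continuous_of_dependsOn_finset (S := S ∪ (finite_bdry V).toFinset) fun x z hxz => ?_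
  refine congrArg ENNReal.toReal (hγ.dependsOn_apply_pi V S ht fun v hv => hxz v ?_)
  simpa using hv

variable [Countable E] [BorelSpace E]

theorem invariant_of_mapClusterPt_field (hγ : IsSpecification γ) {x : Conf E d}
    {P : ProbabilityMeasure (Conf E d)}
    (hP : MapClusterPt P atTop fun W => hγ.field W x) (V : Finset (Site d)) :
    (hγ.toKernel V).Invariant (P : Measure (Conf E d)) := by
  refine invariant_of_mapClusterPt hP
    ((eventually_ge_atTop V).mono fun W hVW => hγ.invariant_field hVW x)
    generateFrom_squareCylinders.symm
    (isPiSystem_squareCylinders (fun _ => MeasurableSpace.isPiSystem_measurableSet)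
      fun _ => MeasurableSet.univ) ?_ ?_
  · rintro _ ⟨S, t, -, rfl⟩
    exact ⟨isClosed_set_pi fun _ _ => isClosed_discrete _,
      isOpen_set_pi S.finite_toSet fun _ _ => isOpen_discrete _⟩
  · rintro _ ⟨S, t, ht, rfl⟩
    exact hγ.continuous_real_pi V S fun v => ht v (Set.mem_univ v)

end IsSpecification

theorem bneg_le (x : SConf d) : bneg ≤ x := by
  intro v
  rcases (x v).2 with h | h <;> norm_num [← Subtype.coe_le_coe, bneg, Set.mem_singleton_iff.1 h]

theorem le_bpos (x : SConf d) : x ≤ bpos := by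
  intro v
  rcases (x v).2 with h | h <;> norm_num [← Subtype.coe_le_coe, bpos, Set.mem_singleton_iff.1 h]

theorem IsLocal.continuous {f : SConf d → ℝ} (hf : IsLocal f) : Continuous f := by
  obtain ⟨S, hS⟩ := hf
  exact continuous_of_dependsOn_finset (S := S) fun x z hxz => hS x z hxz

theorem IsLocal.bdd {f : SConf d → ℝ} (hf : IsLocal f) : Bdd f := by
  obtain ⟨C, hC⟩ := isCompact_univ.exists_bound_of_continuousOn hf.continuous.continuousOn
  exact ⟨C, fun x => hC x (Set.mem_univ x)⟩

theorem Bdd.integrable {X : Type*} [MeasurableSpace X] {μ : Measure X} [IsFiniteMeasure μ]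
    {f : X → ℝ} (hb : Bdd f) (hf : Measurable f) : Integrable f μ := by
  obtain ⟨C, hC⟩ := hb
  exact .of_bound hf.aestronglyMeasurable C (ae_of_all _ hC)

section Spins

variable {γ : Finset (Site d) → SConf d → Measure (SConf d)} {f : SConf d → ℝ}

theorem specifiedBy_iff_forall_invariant (hγ : IsSpecification γ) {μ : Measure (SConf d)} :
    SpecifiedBy γ μ ↔ ∀ V, (hγ.toKernel V).Invariant μ := by
  refine ⟨fun h V => hγ.invariant_toKernel_iff.2 fun A hA => ?_, fun h V A B hA hB => ?_⟩
  · simpa using h V A Set.univ hA MeasurableSet.univ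
  · have hB' : MeasurableSet B := cylinderEvents_le_pi B hB
    calc ∫⁻ x in B, γ V x A ∂μ = ∫⁻ x, γ V x (A ∩ B) ∂μ := by
          simp only [← lintegral_indicator hB', hγ.apply_inter hB]
      _ = μ (A ∩ B) := hγ.invariant_toKernel_iff.1 (h V) _ (hA.inter hB')

theorem MonotoneSpec.integral_bneg_le_integral (hmono : MonotoneSpec γ) (hγ : IsSpecification γ)
    {V : Finset (Site d)} {μ : Measure (SConf d)} [IsProbabilityMeasure μ]
    (hμ : (hγ.toKernel V).Invariant μ) (hf : Measurable f) (hfm : Monotone f) (hfb : Bdd f) :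
    ∫ z, f z ∂(γ V bneg) ≤ ∫ z, f z ∂μ :=
  le_integral_of_invariant hμ (hfb.integrable hf) fun x => hmono V f hf hfm hfb (bneg_le x)

theorem MonotoneSpec.integral_le_integral_bpos (hmono : MonotoneSpec γ) (hγ : IsSpecification γ)
    {V : Finset (Site d)} {μ : Measure (SConf d)} [IsProbabilityMeasure μ]
    (hμ : (hγ.toKernel V).Invariant μ) (hf : Measurable f) (hfm : Monotone f) (hfb : Bdd f) :
    ∫ z, f z ∂μ ≤ ∫ z, f z ∂(γ V bpos) :=
  integral_le_of_invariant hμ (hfb.integrable hf) fun x => hmono V f hf hfm hfb (le_bpos x)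

theorem MonotoneSpec.monotone_integral_bneg (hmono : MonotoneSpec γ) (hγ : IsSpecification γ)
    (hf : Measurable f) (hfm : Monotone f) (hfb : Bdd f) :
    Monotone fun V : Finset (Site d) => ∫ z, f z ∂(γ V bneg) := fun _ W hVW =>
  hmono.integral_bneg_le_integral hγ (μ := hγ.field W bneg) (hγ.invariant_field hVW bneg) hf hfm hfb

theorem MonotoneSpec.antitone_integral_bpos (hmono : MonotoneSpec γ) (hγ : IsSpecification γ)
    (hf : Measurable f) (hfm : Monotone f) (hfb : Bdd f) :
    Antitone fun V : Finset (Site d) => ∫ z, f z ∂(γ V bpos) := fun _ W hVW =>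
  hmono.integral_le_integral_bpos hγ (μ := hγ.field W bpos) (hγ.invariant_field hVW bpos) hf hfm hfb

end Spins

/-- The event that every spin in `S` is `+1`. These events form a generating π-system of increasing
local events. -/
def plusOn (S : Finset (Site d)) : Set (SConf d) := {x | ∀ v ∈ S, x v = bpos v}

theorem measurableSet_plusOn (S : Finset (Site d)) : MeasurableSet (plusOn S) :=
  MeasurableSet.pi S.countable_toSet fun v _ => measurableSet_singleton (bpos v)

theorem isPiSystem_range_plusOn : IsPiSystem (Set.range (plusOn (d := d))) := by
  classical
  rintro _ ⟨S, rfl⟩ _ ⟨T, rfl⟩ -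
  exact ⟨S ∪ T, by ext x; simp [plusOn, or_imp, forall_and]⟩

theorem eq_bneg_of_ne_bpos {x : SConf d} {v : Site d} (h : x v ≠ bpos v) : x v = bneg v :=
  Subtype.ext ((x v).2.resolve_right fun h' => h (Subtype.ext h'))

theorem generateFrom_range_plusOn :
    MeasurableSpace.generateFrom (Set.range (plusOn (d := d))) = MeasurableSpace.pi := by
  classical
  refine le_antisymm (MeasurableSpace.generateFrom_le ?_) (iSup_le fun v => Measurable.comap_le ?_)
  · rintro _ ⟨S, rfl⟩
    exact measurableSet_plusOn S
  · have hplus : MeasurableSet[.generateFrom (Set.range plusOn)] {x : SConf d | x v = bpos v} :=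
      MeasurableSpace.measurableSet_generateFrom ⟨{v}, by simp [plusOn]⟩
    have hite : (fun x : SConf d => x v) = fun x => if x v = bpos v then bpos v else bneg v := by
      ext1 x
      split_ifs with h
      exacts [h, eq_bneg_of_ne_bpos h]
    rw [hite]
    exact Measurable.ite hplus measurable_const measurable_const

theorem isUpperSet_plusOn (S : Finset (Site d)) : IsUpperSet (plusOn S) := fun _ z hxz hx v hv =>
  (le_bpos z v).antisymm ((hx v hv).ge.trans (hxz v))

theorem monotone_indicator_plusOn (S : Finset (Site d)) :
    Monotone ((plusOn S).indicator (1 : SConf d → ℝ)) := by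
  intro x z hxz
  by_cases hx : x ∈ plusOn S
  · rw [Set.indicator_of_mem hx, Set.indicator_of_mem (isUpperSet_plusOn S hxz hx)]
    exact le_rfl
  · rw [Set.indicator_of_notMem hx]
    exact Set.indicator_nonneg (fun _ _ => zero_le_one) z

theorem isLocal_indicator_plusOn (S : Finset (Site d)) :
    IsLocal ((plusOn S).indicator (1 : SConf d → ℝ)) := by
  refine ⟨S, fun x z hxz => ?_⟩
  have hmem : x ∈ plusOn S ↔ z ∈ plusOn S := forall₂_congr fun v hv => by rw [hxz v hv]
  classical simp only [Set.indicator_apply, hmem, Pi.one_apply]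

theorem ext_of_forall_integral_eq_of_monotone_of_isLocal {μ ν : Measure (SConf d)}
    [IsFiniteMeasure μ] [IsFiniteMeasure ν]
    (h : ∀ f : SConf d → ℝ, Monotone f → IsLocal f → ∫ z, f z ∂μ = ∫ z, f z ∂ν) : μ = ν := by
  have hplus (S : Finset (Site d)) : μ (plusOn S) = ν (plusOn S) := by
    have hintegral := h _ (monotone_indicator_plusOn S) (isLocal_indicator_plusOn S)
    rwa [integral_indicator_one (measurableSet_plusOn S),
      integral_indicator_one (measurableSet_plusOn S), measureReal_eq_measureReal_iff] at hintegral
  refine ext_of_generate_finite _ generateFrom_range_plusOn.symm isPiSystem_range_plusOn ?_ ?_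
  · rintro _ ⟨S, rfl⟩
    exact hplus S
  · simpa [plusOn] using hplus ∅

section Extremal

variable {γ : Finset (Site d) → SConf d → Measure (SConf d)} {f : SConf d → ℝ}
  {P : ProbabilityMeasure (SConf d)}

theorem MonotoneSpec.tendsto_integral_bneg (hmono : MonotoneSpec γ) (hγ : IsSpecification γ)
    (hP : MapClusterPt P atTop fun V => hγ.field V bneg) (hfm : Monotone f) (hfl : IsLocal f) :
    Tendsto (fun V => ∫ z, f z ∂(γ V bneg)) atTop (𝓝 (∫ z, f z ∂(P : Measure (SConf d)))) :=
  tendsto_atTop_of_monotone_of_mapClusterPt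
    (hmono.monotone_integral_bneg hγ hfl.continuous.measurable hfm hfl.bdd)
    (mapClusterPt_integral hP hfl.continuous)

theorem MonotoneSpec.tendsto_integral_bpos (hmono : MonotoneSpec γ) (hγ : IsSpecification γ)
    (hP : MapClusterPt P atTop fun V => hγ.field V bpos) (hfm : Monotone f) (hfl : IsLocal f) :
    Tendsto (fun V => ∫ z, f z ∂(γ V bpos)) atTop (𝓝 (∫ z, f z ∂(P : Measure (SConf d)))) :=
  tendsto_atTop_of_antitone_of_mapClusterPt
    (hmono.antitone_integral_bpos hγ hfl.continuous.measurable hfm hfl.bdd)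
    (mapClusterPt_integral hP hfl.continuous)

variable {μ : Measure (SConf d)} [IsProbabilityMeasure μ]

theorem MonotoneSpec.integral_clusterPt_bneg_le_integral (hmono : MonotoneSpec γ)
    (hγ : IsSpecification γ) (hP : MapClusterPt P atTop fun V => hγ.field V bneg)
    (hμ : SpecifiedBy γ μ) (hfm : Monotone f) (hfl : IsLocal f) :
    ∫ z, f z ∂(P : Measure (SConf d)) ≤ ∫ z, f z ∂μ :=
  le_of_tendsto' (hmono.tendsto_integral_bneg hγ hP hfm hfl) fun V =>
    hmono.integral_bneg_le_integral hγ ((specifiedBy_iff_forall_invariant hγ).1 hμ V)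
      hfl.continuous.measurable hfm hfl.bdd

theorem MonotoneSpec.integral_le_integral_clusterPt_bpos (hmono : MonotoneSpec γ)
    (hγ : IsSpecification γ) (hP : MapClusterPt P atTop fun V => hγ.field V bpos)
    (hμ : SpecifiedBy γ μ) (hfm : Monotone f) (hfl : IsLocal f) :
    ∫ z, f z ∂μ ≤ ∫ z, f z ∂(P : Measure (SConf d)) :=
  ge_of_tendsto' (hmono.tendsto_integral_bpos hγ hP hfm hfl) fun V =>
    hmono.integral_le_integral_bpos hγ ((specifiedBy_iff_forall_invariant hγ).1 hμ V)
      hfl.continuous.measurable hfm hfl.bdd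

end Extremal

/-- **Lemma 5.12 (maximal and minimal random fields).**  A monotone specification admits a
minimal and a maximal specified random field `P_−, P_+`, obtained as monotone limits of
`γ_V f` evaluated at the constant configurations `𝐛−, 𝐛+`, these bracket every specified
random field, and uniqueness holds iff `P_+ = P_−`. -/
theorem statement18 {d : ℕ} (γ : Finset (Site d) → SConf d → Measure (SConf d))
    (hγ : IsSpecification γ) (hmono : MonotoneSpec γ) :
    ∃ Pm Pp : Measure (SConf d),
      IsProbabilityMeasure Pm ∧ IsProbabilityMeasure Pp ∧
      SpecifiedBy γ Pm ∧ SpecifiedBy γ Pp ∧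
      (∀ f : SConf d → ℝ, Measurable f → Monotone f → Bdd f → IsLocal f →
        (Monotone fun V : Finset (Site d) => ∫ z, f z ∂(γ V bneg)) ∧
        Tendsto (fun V : Finset (Site d) => ∫ z, f z ∂(γ V bneg)) atTop
          (nhds (∫ z, f z ∂Pm)) ∧
        (Antitone fun V : Finset (Site d) => ∫ z, f z ∂(γ V bpos)) ∧
        Tendsto (fun V : Finset (Site d) => ∫ z, f z ∂(γ V bpos)) atTop
          (nhds (∫ z, f z ∂Pp)) ∧
        ∀ μ : Measure (SConf d), IsProbabilityMeasure μ → SpecifiedBy γ μ →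
          ∫ z, f z ∂Pm ≤ ∫ z, f z ∂μ ∧ ∫ z, f z ∂μ ≤ ∫ z, f z ∂Pp) ∧
      ((∃! μ : Measure (SConf d), IsProbabilityMeasure μ ∧ SpecifiedBy γ μ) ↔ Pp = Pm) := by
  obtain ⟨Pm, hPm⟩ := hγ.exists_mapClusterPt_field bneg
  obtain ⟨Pp, hPp⟩ := hγ.exists_mapClusterPt_field bpos
  have hsm : SpecifiedBy γ Pm :=
    (specifiedBy_iff_forall_invariant hγ).2 (hγ.invariant_of_mapClusterPt_field hPm)
  have hsp : SpecifiedBy γ Pp :=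
    (specifiedBy_iff_forall_invariant hγ).2 (hγ.invariant_of_mapClusterPt_field hPp)
  refine ⟨Pm, Pp, inferInstance, inferInstance, hsm, hsp, fun f hf hfm hfb hfl => ⟨?_, ?_, ?_, ?_,
    fun μ _ hμ => ⟨?_, ?_⟩⟩, fun hunique => ?_, fun heq => ?_⟩
  · exact hmono.monotone_integral_bneg hγ hf hfm hfb
  · exact hmono.tendsto_integral_bneg hγ hPm hfm hfl
  · exact hmono.antitone_integral_bpos hγ hf hfm hfb
  · exact hmono.tendsto_integral_bpos hγ hPp hfm hfl
  · exact hmono.integral_clusterPt_bneg_le_integral hγ hPm hμ hfm hfl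
  · exact hmono.integral_le_integral_clusterPt_bpos hγ hPp hμ hfm hfl
  · exact hunique.unique ⟨inferInstance, hsp⟩ ⟨inferInstance, hsm⟩
  · refine ⟨Pm, ⟨inferInstance, hsm⟩, fun μ ⟨_, hμ⟩ =>
      ext_of_forall_integral_eq_of_monotone_of_isLocal fun f hfm hfl => le_antisymm ?_ ?_⟩
    · exact heq ▸ hmono.integral_le_integral_clusterPt_bpos hγ hPp hμ hfm hfl
    · exact hmono.integral_clusterPt_bneg_le_integral hγ hPm hμ hfm hfl

end RandomField
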